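/- Concatenating two (2,1)-separating codes gives a (2,1)-separating code: let C ⊆ A^n be a (2,1)-separating code and let φ : A → B^m be an injective map whose image φ(A) ⊆ B^m is a (2,1)-separating code. Then the concatenated code Ĉ = { (φ(x_1), φ(x_2), …, φ(x_n)) : x ∈ C } ⊆ B^{nm} is a (2,1)-separating code of the same cardinality |Ĉ| = |C|. -/

import Mathlib

/-!
The triangle inequality `d(x,z) ≤ d(x,y) + d(y,z)` holds coordinate by coordinate, and it is
strict exactly when some coordinate of `y` differs from those of both `x` and `z`
(`hammingDist_lt_add_iff`). So the outer code gives a block `i` with `y i ∉ {x i, z i}`. If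
`x i ≠ z i`, the inner code separates the three words `φ (x i)`, `φ (y i)`, `φ (z i)` at some
position of that block; if `x i = z i`, injectivity of `φ` suffices.
-/

/-- A code `C ⊆ Aⁿ` (coordinates indexed by a finite type `ι`) is `(2,1)`-separating
if all pairwise distinct `x, y, z ∈ C` satisfy the strict triangle inequality
`d(x,z) < d(x,y) + d(y,z)` for the Hamming distance. -/
def IsSeparating21 {ι A : Type*} [Fintype ι] [DecidableEq A] (C : Set (ι → A)) : Prop :=
  ∀ x ∈ C, ∀ y ∈ C, ∀ z ∈ C, x ≠ y → y ≠ z → x ≠ z →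
    hammingDist x z < hammingDist x y + hammingDist y z

theorem hammingDist_lt_add_iff {ι A : Type*} [Fintype ι] [DecidableEq A] (x y z : ι → A) :
    hammingDist x z < hammingDist x y + hammingDist y z ↔ ∃ i, y i ≠ x i ∧ y i ≠ z i := by
  simp only [hammingDist, Finset.card_filter, ← Finset.sum_add_distrib]
  constructor
  · intro h
    obtain ⟨i, -, hi⟩ := Finset.exists_lt_of_sum_lt h
    exact ⟨i, by grind⟩
  · rintro ⟨i, hi⟩
    exact Finset.sum_lt_sum (fun j _ => by grind) ⟨i, Finset.mem_univ i, by grind⟩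

/-- Concatenating two `(2,1)`-separating codes gives a `(2,1)`-separating code:
if `C ⊆ Aⁿ` is `(2,1)`-separating and `φ : A → Bᵐ` is injective with `(2,1)`-separating
image, then the concatenated code `Ĉ ⊆ B^{nm}` (coordinates indexed by `Fin n × Fin m`),
obtained by replacing each coordinate `x i` of each `x ∈ C` by the block `φ (x i)`,
is `(2,1)`-separating and has the same cardinality as `C`. -/
theorem concatenation_separating
    {A B : Type*} [DecidableEq A] [DecidableEq B] {n m : ℕ}
    (C : Set (Fin n → A)) (φ : A → (Fin m → B)) (hφ : Function.Injective φ)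
    (hC : IsSeparating21 C) (hφsep : IsSeparating21 (Set.range φ)) :
    IsSeparating21 ((fun x (p : Fin n × Fin m) => φ (x p.1) p.2) '' C) ∧
      ((fun x (p : Fin n × Fin m) => φ (x p.1) p.2) '' C).ncard = C.ncard := by
  have hinj : Function.Injective (fun (x : Fin n → A) (p : Fin n × Fin m) => φ (x p.1) p.2) := by
    intro x y h
    funext i
    apply hφ
    funext j
    exact congrFun h (i, j)
  refine ⟨?_, Set.ncard_image_of_injective C hinj⟩
  rintro _ ⟨x, hx, rfl⟩ _ ⟨y, hy, rfl⟩ _ ⟨z, hz, rfl⟩ hxy hyz hxz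
  obtain ⟨i, hyx, hyz'⟩ := (hammingDist_lt_add_iff x y z).1
    (hC x hx y hy z hz (fun h => hxy (by rw [h])) (fun h => hyz (by rw [h]))
      (fun h => hxz (by rw [h])))
  rw [hammingDist_lt_add_iff]
  by_cases hxz' : x i = z i
  · obtain ⟨j, hj⟩ := Function.ne_iff.1 (hφ.ne hyx)
    exact ⟨(i, j), hj, by simpa only [← hxz'] using hj⟩
  · obtain ⟨j, hj⟩ := (hammingDist_lt_add_iff _ _ _).1
      (hφsep _ ⟨x i, rfl⟩ _ ⟨y i, rfl⟩ _ ⟨z i, rfl⟩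
        (hφ.ne hyx.symm) (hφ.ne hyz') (hφ.ne hxz'))
    exact ⟨(i, j), hj⟩
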